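/- For θ ∈ ℝ let f_θ(y₁,y₂) = (1/(π√3))·exp(−(2/3)·((y₁−θ)² − (y₁−θ)(y₂−θ/2) + (y₂−θ/2)²)), and for fixed y₁°, g°, ψ ∈ ℝ let k(y₂) = √(3/(4π))·exp(−(3/4)·(g° + y₁°/3 − (2/3)y₂ − ψ)²). Then there exists a constant c ≥ 0 (depending on y₁°, g°, ψ but not on θ) such that for every θ ∈ ℝ: ∫_{g°}^{∞} f_θ(y₁°, y₂)·k(y₂) dy₂ = c · ∫_{g°}^{∞} f_θ(y₁°, y₂) dy₂. -/

import Mathlib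

open MeasureTheory Real

/-- The bivariate normal density with mean `(θ, θ/2)` and covariance `[[1,1/2],[1/2,1]]`. -/
noncomputable def binormal (θ : ℝ) (y₁ y₂ : ℝ) : ℝ :=
  (1 / (π * Real.sqrt 3)) *
    Real.exp (-(2 / 3) * ((y₁ - θ) ^ 2 - (y₁ - θ) * (y₂ - θ / 2) + (y₂ - θ / 2) ^ 2))

/-!
Under `f_θ` the conditional law of `Y₂` given `Y₁ = y₁` is `N(y₁ / 2, 3 / 4)`, whatever `θ`: the
parameter enters only through the marginal density of `Y₁`, which factors out of the integrals over
`y₂`. The constant of proportionality is the mean of the coarsening density under this conditional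
law restricted to the coarsened set.
-/

section Gaussian

open ProbabilityTheory
open scoped NNReal

lemma binormal_eq_gaussianPDFReal_mul (θ y₁ y₂ : ℝ) :
    binormal θ y₁ y₂ = gaussianPDFReal θ 1 y₁ * gaussianPDFReal (y₁ / 2) (3 / 4) y₂ := by
  have normalization : √(2 * π) * √(2 * π * (3 / 4)) = π * √3 := by
    rw [← sqrt_mul (by positivity), show 2 * π * (2 * π * (3 / 4)) = π ^ 2 * 3 by ring,
      sqrt_mul (by positivity), sqrt_sq pi_pos.le]
  simp only [binormal, gaussianPDFReal, NNReal.coe_one, NNReal.coe_div, NNReal.coe_ofNat, mul_one]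
  rw [mul_mul_mul_comm, ← mul_inv, normalization, ← exp_add, one_div]
  congr 2
  ring

section Density

variable {E : Type*} [NormedAddCommGroup E] [NormedSpace ℝ E] {μ : ℝ} {v : ℝ≥0}

lemma integrableOn_gaussianReal_iff_integrableOn_smul {s : Set ℝ} {f : ℝ → E} (hv : v ≠ 0) :
    IntegrableOn f s (gaussianReal μ v) ↔ IntegrableOn (fun x ↦ gaussianPDFReal μ v x • f x) s := by
  simp only [IntegrableOn, gaussianReal_of_var_ne_zero μ hv, restrict_withDensity' s,
    integrable_withDensity_iff_integrable_smul' (measurable_gaussianPDF μ v)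
      (ae_of_all _ fun _ ↦ gaussianPDF_lt_top), toReal_gaussianPDF]

lemma setIntegral_gaussianReal_eq_setIntegral_smul (hv : v ≠ 0) (s : Set ℝ) (f : ℝ → E) :
    ∫ x in s, f x ∂gaussianReal μ v = ∫ x in s, gaussianPDFReal μ v x • f x := by
  simp only [gaussianReal_of_var_ne_zero μ hv, restrict_withDensity' s,
    integral_withDensity_eq_integral_toReal_smul (measurable_gaussianPDF μ v)
      (ae_of_all _ fun _ ↦ gaussianPDF_lt_top), toReal_gaussianPDF]

end Density

lemma setIntegral_binormal_mul (θ y₁ : ℝ) (s : Set ℝ) (k : ℝ → ℝ) :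
    ∫ y₂ in s, binormal θ y₁ y₂ * k y₂ =
      gaussianPDFReal θ 1 y₁ * ∫ y₂ in s, k y₂ ∂gaussianReal (y₁ / 2) (3 / 4) := by
  simp only [setIntegral_gaussianReal_eq_setIntegral_smul (by norm_num : (3 / 4 : ℝ≥0) ≠ 0),
    binormal_eq_gaussianPDFReal_mul, mul_assoc, integral_const_mul, smul_eq_mul]

lemma setIntegral_binormal (θ y₁ : ℝ) (s : Set ℝ) :
    ∫ y₂ in s, binormal θ y₁ y₂ =
      gaussianPDFReal θ 1 y₁ * (gaussianReal (y₁ / 2) (3 / 4)).real s := by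
  simpa using setIntegral_binormal_mul θ y₁ s 1

lemma setIntegral_binormal_mul_eq_setAverage_mul (θ y₁ : ℝ) (s : Set ℝ) (k : ℝ → ℝ) :
    ∫ y₂ in s, binormal θ y₁ y₂ * k y₂ =
      (⨍ y₂ in s, k y₂ ∂gaussianReal (y₁ / 2) (3 / 4)) * ∫ y₂ in s, binormal θ y₁ y₂ := by
  rw [setIntegral_binormal_mul, setIntegral_binormal, ← measure_smul_setAverage k (by finiteness),
    smul_eq_mul]
  ring

lemma integrableOn_binormal_mul (θ : ℝ) {y₁ : ℝ} {s : Set ℝ} {k : ℝ → ℝ}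
    (hk : IntegrableOn k s (gaussianReal (y₁ / 2) (3 / 4))) :
    IntegrableOn (fun y₂ ↦ binormal θ y₁ y₂ * k y₂) s := by
  have hpdf := (integrableOn_gaussianReal_iff_integrableOn_smul (by norm_num)).1 hk
  simpa only [IntegrableOn, binormal_eq_gaussianPDFReal_mul, mul_assoc, smul_eq_mul]
    using hpdf.const_mul (gaussianPDFReal θ 1 y₁)

lemma integrable_exp_neg_mul_sq_comp {α : Type*} [MeasurableSpace α] {μ : Measure α}
    [IsFiniteMeasure μ] {b : ℝ} (hb : 0 ≤ b) {u : α → ℝ} (hu : AEMeasurable u μ) :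
    Integrable (fun x ↦ exp (-b * u x ^ 2)) μ := by
  refine .of_bound (by fun_prop) 1 (ae_of_all _ fun x ↦ ?_)
  rw [norm_of_nonneg (exp_pos _).le, exp_le_one_iff, neg_mul, neg_nonpos]
  positivity

theorem censoring_lig_general (y₁ : ℝ) (s : Set ℝ) {k : ℝ → ℝ} (hk₀ : ∀ y₂, 0 ≤ k y₂)
    (hk : IntegrableOn k s (gaussianReal (y₁ / 2) (3 / 4))) :
    ∃ c : ℝ, 0 ≤ c ∧ ∀ θ : ℝ,
      IntegrableOn (fun y₂ ↦ binormal θ y₁ y₂ * k y₂) s ∧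
        ∫ y₂ in s, binormal θ y₁ y₂ * k y₂ = c * ∫ y₂ in s, binormal θ y₁ y₂ :=
  ⟨⨍ y₂ in s, k y₂ ∂gaussianReal (y₁ / 2) (3 / 4), integral_nonneg hk₀, fun θ ↦
    ⟨integrableOn_binormal_mul θ hk, setIntegral_binormal_mul_eq_setAverage_mul θ y₁ s k⟩⟩

end Gaussian

/-- **Example 4.1** (Lu–Copas), likelihood ignorability: for the coarse observation
`z = {y₁°} × (g°, ∞)` with coarsening density
`k(y₂) = √(3/(4π)) exp(-(3/4)(g° + y₁°/3 - (2/3)y₂ - ψ)²)`, the observed-data likelihood in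
`θ` is proportional to the one obtained by ignoring the censoring mechanism. -/
theorem censoring_lig (y₁o go ψ : ℝ) :
    ∃ c : ℝ, 0 ≤ c ∧
      ∀ θ : ℝ,
        (∫ y₂ in Set.Ioi go,
            binormal θ y₁o y₂ *
              (Real.sqrt (3 / (4 * π)) *
                Real.exp (-(3 / 4) * (go + y₁o / 3 - (2 / 3) * y₂ - ψ) ^ 2)))
          = c * ∫ y₂ in Set.Ioi go, binormal θ y₁o y₂ := by
  refine (censoring_lig_general y₁o (Set.Ioi go) (fun _ ↦ ?_) ?_).imp
    fun c ⟨hc, h⟩ ↦ ⟨hc, fun θ ↦ (h θ).2⟩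
  · positivity
  · exact ((integrable_exp_neg_mul_sq_comp (by norm_num) (by fun_prop)).const_mul _).integrableOn
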